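/- For a short exact sequence 0 → S → E → Q → 0 of finitely generated abelian groups with E free and the rank of S equal to t, if S is generated by elements whose Euclidean norms (for some fixed embedding E ↪ ℝ^b isometric on the standard basis) are all at most b₀ ≥ 1, then card(Q_tors) ≤ b₀^t. -/

import Mathlib

open scoped BigOperators

/-!
Let `w` be `t` linearly independent vectors among the generators of `S`. Since the standard basis
vectors generate `Q = E / S`, some of them, say `e_j` for `j ∈ J`, form a maximal independent family
in `Q`. The subgroup they span in `Q` is torsion-free, so `Q_tors` embeds into the quotient of `Q`
by it, which is a quotient of `E / L`, where `L` is spanned by the `w_i` and the `e_j`. By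
rank–nullity `L` has full rank, so `|E / L|` is the absolute value of a determinant with rows `w_i`
and `e_j`, which Hadamard's inequality bounds by `∏ ‖w_i‖ ≤ b₀ ^ t`.
-/

section Torsion

open Submodule

theorem natCard_le_natCard_quotient_of_disjoint {R M : Type*} [Ring R] [AddCommGroup M] [Module R M]
    {P N : Submodule R M} [Finite (M ⧸ N)] (hPN : Disjoint P N) :
    Nat.card P ≤ Nat.card (M ⧸ N) := by
  have hinj : Set.InjOn N.mkQ P := LinearMap.disjoint_ker_iff_injOn.1 (by rwa [ker_mkQ])
  exact Nat.card_le_card_of_injective _ hinj.injective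

variable {R M ι : Type*} [CommRing R] [IsDomain R] [AddCommGroup M] [Module R M]

theorem exists_linearIndepOn_natCard_eq_finrank {f : ι → M} (hf : span R (Set.range f) = ⊤) :
    ∃ s : Set ι, LinearIndepOn R f s ∧ Nat.card s = Module.finrank R M := by
  obtain ⟨s, hs, hmax⟩ := exists_maximal_linearIndepOn R f
  have htorsion : Module.IsTorsion R (M ⧸ span R (f '' s)) := by
    suffices span R (Set.range f) ≤ (torsion R (M ⧸ span R (f '' s))).comap (mkQ _) by
      rintro ⟨x⟩
      exact this (hf ▸ mem_top)
    rw [span_le, Set.range_subset_iff]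
    intro i
    by_cases hi : i ∈ s
    · have hzero : mkQ (span R (f '' s)) (f i) = 0 :=
        (Quotient.mk_eq_zero _).2 (subset_span (Set.mem_image_of_mem f hi))
      exact mem_comap.2 (hzero ▸ zero_mem _)
    · obtain ⟨a, ha, hmem⟩ := hmax i hi
      exact ⟨⟨a, mem_nonZeroDivisors_of_ne_zero ha⟩, (Quotient.mk_eq_zero _).2 hmem⟩
  have hrank : Module.rank R (span R (f '' s)) = Module.rank R M := by
    rw [← rank_quotient_add_rank (span R (f '' s)), htorsion.rank_eq_zero, zero_add]
  refine ⟨s, hs, ?_⟩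
  rw [Module.finrank, ← hrank, Set.image_eq_range, rank_span hs]
  exact (Nat.card_range_of_injective hs.injective).symm

theorem disjoint_torsion_span_range {v : ι → M} (hv : LinearIndependent R v) :
    Disjoint (torsion R M) (span R (Set.range v)) := by
  have : Module.Free R (span R (Set.range v)) := .of_basis (Module.Basis.span hv)
  rw [disjoint_def]
  rintro x ⟨a, ha⟩ hx
  have hax : (a : R) • (⟨x, hx⟩ : span R (Set.range v)) = 0 := Subtype.ext ha
  simpa using (smul_eq_zero_iff_right (nonZeroDivisors.coe_ne_zero a)).1 hax

theorem natCard_torsion_quotient_le_natCard_quotient {S L : Submodule R M} [Finite (M ⧸ L)]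
    {v : ι → M} (hv : LinearIndependent R (S.mkQ ∘ v)) (hL : L ≤ S ⊔ span R (Set.range v)) :
    Nat.card (torsion R (M ⧸ S)) ≤ Nat.card (M ⧸ L) := by
  have hF : L ≤ (span R (Set.range (S.mkQ ∘ v))).comap S.mkQ := by
    rwa [Set.range_comp, ← map_span, comap_map_mkQ]
  have hsurj : Function.Surjective (L.mapQ _ S.mkQ hF) := by
    rw [← LinearMap.range_eq_top, range_mapQ, range_mkQ, Submodule.map_top, range_mkQ]
  have : Finite ((M ⧸ S) ⧸ span R (Set.range (S.mkQ ∘ v))) := .of_surjective _ hsurj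
  calc Nat.card (torsion R (M ⧸ S)) ≤ Nat.card ((M ⧸ S) ⧸ span R (Set.range (S.mkQ ∘ v))) :=
        natCard_le_natCard_quotient_of_disjoint (disjoint_torsion_span_range hv)
    _ ≤ Nat.card (M ⧸ L) := Nat.card_le_card_of_surjective _ hsurj

end Torsion

section Determinant

open Module

variable {ι κ : Type*} [Fintype ι] [Fintype κ]

theorem abs_orthonormalBasis_det_le_prod_norm [DecidableEq ι] {E : Type*} [NormedAddCommGroup E]
    [InnerProductSpace ℝ E] (b : OrthonormalBasis ι ℝ E) (v : ι → E) :
    |b.toBasis.det v| ≤ ∏ i, ‖v i‖ := by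
  let e := Fintype.equivFin ι
  have : Fact (finrank ℝ E = Fintype.card ι) := ⟨finrank_eq_card_basis b.toBasis⟩
  have h := (b.reindex e).toBasis.orientation.abs_volumeForm_apply_le (v ∘ e.symm)
  rw [Orientation.volumeForm_robust' _ (b.reindex e), b.reindex_toBasis, Basis.det_reindex,
    Function.comp_assoc, e.symm_comp_self, Function.comp_id] at h
  exact h.trans_eq (e.symm.prod_comp fun i ↦ ‖v i‖)

theorem abs_det_le_prod_sqrt_sum_sq [DecidableEq ι] (A : Matrix ι ι ℝ) :
    |A.det| ≤ ∏ i, √(∑ j, A i j ^ 2) := by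
  have hadamard := abs_orthonormalBasis_det_le_prod_norm (EuclideanSpace.basisFun ι ℝ)
    fun i ↦ WithLp.toLp 2 (A i)
  have hdet : (EuclideanSpace.basisFun ι ℝ).toBasis.det (fun i ↦ WithLp.toLp 2 (A i)) = A.det := by
    rw [Basis.det_apply, ← A.det_transpose]
    rfl
  simpa only [hdet, EuclideanSpace.norm_eq, Real.norm_eq_abs, sq_abs] using hadamard

theorem natCard_quotient_span_range_eq_natAbs_det [DecidableEq ι] {v : ι → ι → ℤ}
    (hv : LinearIndependent ℤ v) :
    Nat.card ((ι → ℤ) ⧸ Submodule.span ℤ (Set.range v)) = (Matrix.of v).det.natAbs := by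
  rw [← Submodule.natAbs_det_basis_change (Pi.basisFun ℤ ι) _ (Basis.span hv),
    Pi.basisFun_det_apply]
  congr 3
  ext1 i
  exact congrArg Subtype.val (Basis.span_apply hv i)

theorem natCard_quotient_span_range_le_prod_sqrt_sum_sq {v : κ → ι → ℤ} (hv : LinearIndependent ℤ v)
    (hcard : Fintype.card κ = Fintype.card ι) :
    (Nat.card ((ι → ℤ) ⧸ Submodule.span ℤ (Set.range v)) : ℝ) ≤
      ∏ k, √(∑ j, (v k j : ℝ) ^ 2) := by
  classical
  let e : ι ≃ κ := (Fintype.equivOfCardEq hcard).symm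
  let A : Matrix ι ι ℤ := Matrix.of (v ∘ e)
  calc (Nat.card ((ι → ℤ) ⧸ Submodule.span ℤ (Set.range v)) : ℝ)
      = |(A.map (Int.castRingHom ℝ)).det| := by
        rw [← e.surjective.range_comp v,
          natCard_quotient_span_range_eq_natAbs_det (hv.comp e e.injective),
          Nat.cast_natAbs, Int.cast_abs, ← RingHom.mapMatrix_apply, ← RingHom.map_det,
          Int.coe_castRingHom]
    _ ≤ ∏ i, √(∑ j, (v (e i) j : ℝ) ^ 2) := abs_det_le_prod_sqrt_sum_sq _
    _ = ∏ k, √(∑ j, (v k j : ℝ) ^ 2) := e.prod_comp fun k ↦ √(∑ j, (v k j : ℝ) ^ 2)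

theorem finite_quotient_span_range {M : Type*} [AddCommGroup M] [Module.Finite ℤ M]
    {v : κ → M} (hv : LinearIndependent ℤ v) (hcard : Fintype.card κ = finrank ℤ M) :
    Finite (M ⧸ Submodule.span ℤ (Set.range v)) := by
  have hrank : finrank ℤ (M ⧸ Submodule.span ℤ (Set.range v)) = 0 := by
    have := (Submodule.span ℤ (Set.range v)).finrank_quotient_add_finrank
    have := finrank_span_eq_card hv
    omega
  exact Module.finite_of_fg_torsion _ (finrank_eq_zero_iff_isTorsion.1 hrank)

end Determinant

theorem natCard_torsion_quotient_le_prod_sqrt_sum_sq {ι κ : Type*} [Fintype ι] [Fintype κ]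
    {S : Submodule ℤ (ι → ℤ)} {w : κ → S} (hw : LinearIndependent ℤ w)
    (hcard : Fintype.card κ = Module.finrank ℤ S) :
    (Nat.card (Submodule.torsion ℤ ((ι → ℤ) ⧸ S)) : ℝ) ≤
      ∏ k, √(∑ j, ((w k : ι → ℤ) j : ℝ) ^ 2) := by
  classical
  let std (j : ι) : ι → ℤ := Pi.single j 1
  have hspan : Submodule.span ℤ (Set.range (S.mkQ ∘ std)) = ⊤ := by
    rw [Set.range_comp, ← Submodule.map_span, ← Submodule.range_mkQ, LinearMap.range_eq_map]
    congr 1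
    exact (Pi.basisFun ℤ ι).span_eq
  obtain ⟨J, hJ, hJcard⟩ := exists_linearIndepOn_natCard_eq_finrank hspan
  let v : κ ⊕ J → ι → ℤ := Sum.elim (fun k ↦ w k) fun j ↦ std j
  have hv : LinearIndependent ℤ v := hw.sumElim_of_quotient _ hJ
  have hvcard : Fintype.card (κ ⊕ J) = Fintype.card ι := by
    rw [Fintype.card_sum, hcard, ← Nat.card_eq_fintype_card (α := J), hJcard, add_comm,
      S.finrank_quotient_add_finrank, Module.finrank_fintype_fun_eq_card]
  have hvle : Submodule.span ℤ (Set.range v) ≤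
      S ⊔ Submodule.span ℤ (Set.range fun j : J ↦ std j) := by
    rw [Set.Sum.elim_range, Submodule.span_union]
    gcongr
    exact Submodule.span_le.2 (Set.range_subset_iff.2 fun k ↦ (w k).2)
  have : Finite ((ι → ℤ) ⧸ Submodule.span ℤ (Set.range v)) :=
    finite_quotient_span_range hv (by rw [hvcard, Module.finrank_fintype_fun_eq_card])
  calc (Nat.card (Submodule.torsion ℤ ((ι → ℤ) ⧸ S)) : ℝ)
      ≤ Nat.card ((ι → ℤ) ⧸ Submodule.span ℤ (Set.range v)) :=
        mod_cast natCard_torsion_quotient_le_natCard_quotient hJ hvle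
    _ ≤ ∏ x, √(∑ j, (v x j : ℝ) ^ 2) := natCard_quotient_span_range_le_prod_sqrt_sum_sq hv hvcard
    _ = ∏ k, √(∑ j, ((w k : ι → ℤ) j : ℝ) ^ 2) := by
        simp [v, std, Fintype.prod_sum_type, Pi.single_apply]

theorem stmt_17 {b t : ℕ} (b₀ : ℝ) (hb₀ : 1 ≤ b₀)
    (S : Submodule ℤ (Fin b → ℤ))
    (T : Set (Fin b → ℤ))
    (hTspan : Submodule.span ℤ T = S)
    (hTnorm : ∀ x ∈ T, Real.sqrt (∑ j, (x j : ℝ) ^ 2) ≤ b₀)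
    (ht : Module.finrank ℤ S = t) :
    (Nat.card (Submodule.torsion ℤ ((Fin b → ℤ) ⧸ S)) : ℝ) ≤ b₀ ^ t := by
  subst hTspan ht
  let gen : ((↑) ⁻¹' T : Set (Submodule.span ℤ T)) → Submodule.span ℤ T := (↑)
  have hgen : Submodule.span ℤ (Set.range gen) = ⊤ := by
    rw [Subtype.range_coe, Submodule.span_span_coe_preimage]
  obtain ⟨I, hI, hIcard⟩ := exists_linearIndepOn_natCard_eq_finrank hgen
  have : Finite I := hI.finite
  have := Fintype.ofFinite I
  rw [Nat.card_eq_fintype_card] at hIcard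
  calc (Nat.card (Submodule.torsion ℤ ((Fin b → ℤ) ⧸ Submodule.span ℤ T)) : ℝ)
      ≤ ∏ x : I, √(∑ j, ((gen x : Fin b → ℤ) j : ℝ) ^ 2) :=
        natCard_torsion_quotient_le_prod_sqrt_sum_sq hI hIcard
    _ ≤ ∏ _x : I, b₀ :=
        Finset.prod_le_prod (fun _ _ ↦ Real.sqrt_nonneg _) fun x _ ↦ hTnorm _ x.1.2
    _ = b₀ ^ Module.finrank ℤ (Submodule.span ℤ T) := by
        rw [Finset.prod_const, Finset.card_univ, hIcard]
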